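/- Let G be a finite group and H a finite nonabelian simple group with cod(G) = cod(H). Then G is a perfect group, i.e. G equals its commutator subgroup. -/

import Mathlib

/-!
A group `G` that is not perfect has a linear character of prime order `p`, and such a character has
codegree `p` (`exists_prime_mem_codSet`). A finite nonabelian simple group `H` has no prime
codegree (`not_prime_mem_codSet`): an irreducible representation `V` of `H` of degree `d` with
nontrivial kernel has codegree at most `1`, and a faithful one of codegree `p` would give
`|H| = p * d`, because `d` divides `|H|` (`FDRep.finrank_dvd_card`), while `d ^ 2 ≤ |H|`
(`FDRep.finrank_sq_le`). So `d ≤ p`, and Sylow's theorems show that a simple group of such an order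
is an abelian `p`-group (`IsSimpleGroup.commute_of_card_eq`).

Both facts about `d` come from one identity, `FDRep.sum_smul_eq_smul_smulRight`, obtained from
Schur's lemma by averaging a rank-one operator over the group: it shows that the operators `ρ(g)`
span `End V`, and, after taking traces, that `∑ g, χ(g⁻¹) ρ(g)` is the scalar `|H| / d`, which is
therefore an algebraic integer.
-/

open CategoryTheory

/-- The kernel of a finite-dimensional complex representation, as a subgroup. -/
def repKer {G : Type} [Group G] (V : FDRep ℂ G) : Subgroup G where
  carrier := {g | V.ρ g = 1}
  one_mem' := map_one _
  mul_mem' := by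
    intro a b ha hb
    simp only [Set.mem_setOf_eq, map_mul] at *
    rw [ha, hb, one_mul]
  inv_mem' := by
    intro a ha
    simp only [Set.mem_setOf_eq] at *
    have h : V.ρ a⁻¹ * V.ρ a = 1 := by rw [← map_mul, inv_mul_cancel, map_one]
    rwa [ha, mul_one] at h

/-- The codegree of a character, `|G : ker χ| / χ(1)` (the division is exact). -/
noncomputable def codeg {G : Type} [Group G] (V : FDRep ℂ G) : ℕ :=
  (repKer V).index / Module.finrank ℂ V

/-- The codegree set of a group: codegrees of its irreducible complex characters. -/
def codSet (G : Type) [Group G] : Set ℕ :=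
  {n | ∃ V : FDRep ℂ G, Simple V ∧ codeg V = n}

open Module in
/-- Schur's lemma for linear endomorphisms of the underlying space that commute with the action. -/
theorem FDRep.exists_eq_smul_one {G : Type} [Group G] (V : FDRep ℂ G) [Simple V]
    (A : End ℂ V) (hA : ∀ g, A * V.ρ g = V.ρ g * A) : ∃ c : ℂ, A = c • 1 := by
  let f : V ⟶ V := ⟨InducedCategory.homMk (ModuleCat.ofHom A), fun g ↦ by
    ext x
    exact congr($(hA g) x)⟩
  obtain ⟨c, hc⟩ := endomorphism_simple_eq_smul_id ℂ f
  refine ⟨c, ?_⟩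
  have := congr(($hc).hom.hom.hom)
  exact this.symm

open Module in
theorem FDRep.finrank_ne_zero {G : Type} [Group G] (V : FDRep ℂ G) [Simple V] :
    finrank ℂ V ≠ 0 := by
  intro h
  have := finrank_zero_iff.mp h
  apply id_nonzero V
  ext x
  exact Subsingleton.elim (α := V) _ _

open Module in
/-- The averaging identity `∑ g, f (g⁻¹ w) • ρ(g) = (|G| / dim V) • (v ↦ f v • w)`: up to a nonzero
scalar, every rank-one operator is an explicit combination of the operators `ρ(g)`. -/
theorem FDRep.sum_smul_eq_smul_smulRight {G : Type} [Group G] [Fintype G] (V : FDRep ℂ G)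
    [Simple V] (f : Dual ℂ V) (w : V) :
    ∑ g, f (V.ρ g⁻¹ w) • V.ρ g =
      ((Nat.card G : ℂ) / finrank ℂ V) • f.smulRight w := by
  ext v
  -- Schur's lemma is applied to the average `A` of the rank-one operator `f.smulRight v`; the value
  -- `A w` is the left-hand side evaluated at `v`.
  set A : End ℂ V := ∑ g, V.ρ g * f.smulRight v * V.ρ g⁻¹ with hAdef
  have hA : ∀ h, A * V.ρ h = V.ρ h * A := by
    intro h
    rw [hAdef, Finset.sum_mul, Finset.mul_sum]
    refine Fintype.sum_equiv (Equiv.mulLeft h⁻¹) _ _ fun g ↦ ?_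
    simp only [Equiv.coe_mulLeft, mul_inv_rev, inv_inv, map_mul, mul_assoc]
    rw [← mul_assoc (V.ρ h) (V.ρ h⁻¹), ← map_mul V.ρ h h⁻¹, mul_inv_cancel, map_one,
      one_mul]
  obtain ⟨c, hc⟩ := V.exists_eq_smul_one A hA
  have htr : c * finrank ℂ V = Nat.card G * f v := by
    have h1 := congr(LinearMap.trace ℂ V $hc)
    rw [map_smul, LinearMap.trace_one, smul_eq_mul] at h1
    rw [← h1, hAdef, map_sum]
    have : ∀ g, LinearMap.trace ℂ V (V.ρ g * f.smulRight v * V.ρ g⁻¹) = f v := by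
      intro g
      rw [LinearMap.trace_mul_comm, ← mul_assoc, ← map_mul, inv_mul_cancel, map_one, one_mul]
      simp
    simp [this]
  have hd : (finrank ℂ V : ℂ) ≠ 0 := by exact_mod_cast V.finrank_ne_zero
  have hc' : c = Nat.card G / finrank ℂ V * f v := by
    field_simp; linear_combination htr
  have := congr($hc w)
  simp only [hAdef, LinearMap.sum_apply, Module.End.mul_apply, LinearMap.smulRight_apply, map_smul,
    LinearMap.smul_apply, Module.End.one_apply] at this ⊢
  rw [this, hc', mul_smul]

open Module in
/-- An operator is a sum of rank-one operators, one for each vector of a basis. -/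
theorem LinearMap.sum_smulRight_coord {V ι : Type*} [AddCommGroup V] [Module ℂ V] [Fintype ι]
    (b : Basis ι ℂ V) (A : End ℂ V) : ∑ i, (b.coord i).smulRight (A (b i)) = A := by
  refine b.ext fun j ↦ ?_
  classical
  simp [Finsupp.single_apply]

open Module in
/-- The operators `ρ(g)` span `End V` (Burnside's theorem), which has dimension `(dim V) ^ 2`; hence
this is at most `|G|`. -/
theorem FDRep.finrank_sq_le {G : Type} [Group G] [Finite G] (V : FDRep ℂ G) [Simple V] :
    finrank ℂ V ^ 2 ≤ Nat.card G := by
  have := Fintype.ofFinite G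
  have hspan : Submodule.span ℂ (Set.range V.ρ) = ⊤ := by
    rw [eq_top_iff]
    intro A _
    rw [← LinearMap.sum_smulRight_coord (finBasis ℂ V) A]
    refine Submodule.sum_mem _ fun i _ ↦ ?_
    have hc : (Nat.card G : ℂ) / finrank ℂ V ≠ 0 :=
      div_ne_zero (by exact_mod_cast Nat.card_pos.ne') (by exact_mod_cast V.finrank_ne_zero)
    rw [← Submodule.smul_mem_iff _ hc, ← V.sum_smul_eq_smul_smulRight]
    exact Submodule.sum_mem _ fun g _ ↦ Submodule.smul_mem _ _ (Submodule.subset_span ⟨g, rfl⟩)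
  have h := finrank_range_le_card (R := ℂ) (b := V.ρ)
  rw [Set.finrank, hspan, finrank_top, finrank_linearMap] at h
  rwa [sq, Nat.card_eq_fintype_card]

open Module in
/-- The averaging identity summed over the rank-one pieces of the identity operator: the sum
`∑ g, χ(g⁻¹) g` in the group algebra acts on `V` as the scalar `|G| / χ(1)`. -/
theorem FDRep.sum_character_smul {G : Type} [Group G] [Fintype G] (V : FDRep ℂ G)
    [Simple V] :
    ∑ g, V.character g⁻¹ • V.ρ g = ((Nat.card G : ℂ) / finrank ℂ V) • (1 : End ℂ V) := by
  set b := finBasis ℂ V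
  rw [← LinearMap.sum_smulRight_coord b 1, Finset.smul_sum]
  simp_rw [← V.sum_smul_eq_smul_smulRight]
  rw [Finset.sum_comm]
  refine Finset.sum_congr rfl fun g _ ↦ ?_
  rw [← Finset.sum_smul, character, LinearMap.trace_eq_matrix_trace ℂ b, Matrix.trace]
  simp [LinearMap.toMatrix_apply]

open Module in
theorem FDRep.isIntegral_character {G : Type} [Group G] [Finite G] (V : FDRep ℂ G) (g : G) :
    IsIntegral ℤ (V.character g) := by
  rw [character, Module.End.trace_eq_sum_roots_charpoly_of_splits (IsAlgClosed.splits _)]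
  refine IsIntegral.multiset_sum fun μ hμ ↦ ?_
  have hev : Module.End.HasEigenvalue (V.ρ g) μ :=
    (Module.End.hasEigenvalue_iff_isRoot_charpoly _ _).mpr (Polynomial.isRoot_of_mem_roots hμ)
  obtain ⟨v, hv⟩ := hev.exists_hasEigenvector
  have h := hv.pow_apply (Nat.card G)
  rw [← map_pow, pow_card_eq_one', map_one, Module.End.one_apply] at h
  have hμ1 : μ ^ Nat.card G = 1 := by
    refine smul_left_injective ℂ hv.2 ?_
    simpa using h.symm
  exact IsIntegral.of_pow Nat.card_pos (hμ1 ▸ isIntegral_one)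

open Module in
/-- The degree of an irreducible character divides the order of the group. With `R` the ring of
algebraic integers, `∑ g, χ(g⁻¹) g` lies in `R[G]`, which is finite over `R`, so the scalar
`|G| / χ(1)` by which it acts is a rational algebraic integer. -/
theorem FDRep.finrank_dvd_card {G : Type} [Group G] [Finite G] (V : FDRep ℂ G) [Simple V] :
    finrank ℂ V ∣ Nat.card G := by
  have := Fintype.ofFinite G
  set R := integralClosure ℤ ℂ
  let φ : MonoidAlgebra R G →ₐ[R] End ℂ V := MonoidAlgebra.lift R (End ℂ V) G V.ρ
  let e : MonoidAlgebra R G :=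
    ∑ g, MonoidAlgebra.single g ⟨V.character g⁻¹, V.isIntegral_character g⁻¹⟩
  have he : φ e = algebraMap ℂ (End ℂ V) ((Nat.card G : ℂ) / finrank ℂ V) := by
    rw [Algebra.algebraMap_eq_smul_one, ← V.sum_character_smul]
    simp only [e, φ, map_sum, MonoidAlgebra.lift_single]
    rfl
  have hint : IsIntegral R (φ e) := (Algebra.IsIntegral.isIntegral e).map φ
  have : Nontrivial V := Module.nontrivial_of_finrank_pos (R := ℂ)
    (Nat.pos_of_ne_zero V.finrank_ne_zero)
  rw [he, isIntegral_algebraMap_iff (algebraMap ℂ (End ℂ V)).injective] at hint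
  have hZ : IsIntegral ℤ ((Nat.card G : ℂ) / finrank ℂ V) := isIntegral_trans _ hint
  have hQ : IsIntegral ℤ ((Nat.card G : ℚ) / finrank ℂ V) := by
    rw [← isIntegral_algebraMap_iff (algebraMap ℚ ℂ).injective]
    simpa using hZ
  obtain ⟨m, hm⟩ := IsIntegrallyClosed.isIntegral_iff.mp hQ
  have hd : (finrank ℂ V : ℚ) ≠ 0 := by exact_mod_cast V.finrank_ne_zero
  rw [eq_div_iff hd] at hm
  rw [← Int.natCast_dvd_natCast]
  refine ⟨m, ?_⟩
  have : (m * finrank ℂ V : ℤ) = Nat.card G := by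
    have : ((m * finrank ℂ V : ℤ) : ℚ) = (Nat.card G : ℤ) := by
      push_cast
      exact hm
    exact_mod_cast this
  rw [← this, mul_comm]

theorem IsPGroup.commute_of_isSimpleGroup {H : Type} [Group H] [Finite H] [IsSimpleGroup H]
    {p : ℕ} [Fact p.Prime] (hH : IsPGroup p H) (a b : H) : a * b = b * a := by
  have hc := hH.center_nontrivial
  have htop : Subgroup.center H = ⊤ :=
    (Subgroup.Normal.eq_bot_or_eq_top inferInstance).resolve_left
      ((Subgroup.nontrivial_iff_ne_bot _).mp hc)
  have : b ∈ Subgroup.center H := htop ▸ Subgroup.mem_top b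
  exact Subgroup.mem_center_iff.mp this a

/-- The bound `d ^ 2 ≤ |H| = p * d` forces `d ≤ p`. If `d = p` then `H` is a `p`-group; if `d < p` then
Sylow's third theorem makes the Sylow `p`-subgroup normal, hence all of `H`. Either way `H` is a
simple `p`-group, hence abelian. -/
theorem IsSimpleGroup.commute_of_card_eq {H : Type} [Group H] [Finite H] [IsSimpleGroup H]
    {p d : ℕ} (hp : p.Prime) (hcard : Nat.card H = p * d) (hd : d ^ 2 ≤ Nat.card H) (a b : H) :
    a * b = b * a := by
  have : Fact p.Prime := ⟨hp⟩
  have hd0 : 0 < d := Nat.pos_of_ne_zero fun h ↦ by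
    rw [h, mul_zero] at hcard; exact Nat.card_pos.ne' hcard
  have hdp : d ≤ p := by rw [hcard, sq] at hd; exact Nat.le_of_mul_le_mul_right hd hd0
  rcases hdp.eq_or_lt with rfl | hlt
  · exact (IsPGroup.of_card (p := d) (n := 2) (by rw [hcard, sq])).commute_of_isSimpleGroup a b
  have P : Sylow p H := default
  have hpH : p ∣ Nat.card H := hcard ▸ dvd_mul_right _ _
  obtain ⟨k, hk⟩ := P.dvd_card_of_dvd_card hpH
  have hidx : P.index ∣ d := by
    have h := Subgroup.card_mul_index (P : Subgroup H)
    rw [hk, hcard, mul_assoc] at h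
    exact ⟨k, by rw [← Nat.eq_of_mul_eq_mul_left hp.pos h, mul_comm]⟩
  have hn : Nat.card (Sylow p H) = 1 := by
    have hle : Nat.card (Sylow p H) ≤ d := Nat.le_of_dvd hd0 (P.card_dvd_index.trans hidx)
    have hmod := card_sylow_modEq_one p H
    exact Nat.ModEq.eq_of_lt_of_lt hmod (hle.trans_lt hlt) hp.one_lt
  have : Subsingleton (Sylow p H) := (Nat.card_eq_one_iff_unique.mp hn).1
  have htop := P.normal_of_subsingleton.eq_bot_or_eq_top.resolve_left (P.ne_bot_of_dvd_card hpH)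
  have hH : IsPGroup p H := by
    have := P.isPGroup'
    rw [htop] at this
    exact this.of_equiv Subgroup.topEquiv
  exact hH.commute_of_isSimpleGroup a b

theorem repKer_eq_ker {G : Type} [Group G] (V : FDRep ℂ G) : repKer V = V.ρ.ker := rfl

theorem not_prime_mem_codSet {H : Type} [Group H] [Finite H] [IsSimpleGroup H]
    (hnonab : ∃ a b : H, a * b ≠ b * a) {p : ℕ} (hp : p.Prime) : p ∉ codSet H := by
  rintro ⟨V, hV, hcod⟩
  rw [codeg, repKer_eq_ker] at hcod
  -- A simple group has only faithful and trivial representations; the latter have codegree at most 1.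
  rcases (inferInstance : V.ρ.ker.Normal).eq_bot_or_eq_top with h | h
  · rw [h, Subgroup.index_bot] at hcod
    obtain ⟨a, b, hab⟩ := hnonab
    exact hab (IsSimpleGroup.commute_of_card_eq hp
      (by rw [← hcod, Nat.div_mul_cancel V.finrank_dvd_card]) V.finrank_sq_le a b)
  · rw [h, Subgroup.index_top] at hcod
    exact absurd (hcod ▸ Nat.div_le_self 1 _) hp.one_lt.not_ge

/-- The one-dimensional representation attached to a linear character. -/
noncomputable def linearRep {G : Type} [Group G] (χ : G →* ℂˣ) : FDRep ℂ G :=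
  FDRep.of (((Algebra.lmul ℂ ℂ : ℂ →* Module.End ℂ ℂ).comp (Units.coeHom ℂ)).comp χ)

theorem linearRep_ρ_apply {G : Type} [Group G] (χ : G →* ℂˣ) (g : G) :
    (linearRep χ).ρ g = Algebra.lmul ℂ ℂ (χ g : ℂ) := rfl

theorem finrank_linearRep {G : Type} [Group G] (χ : G →* ℂˣ) :
    Module.finrank ℂ (linearRep χ) = 1 := Module.finrank_self ℂ

theorem simple_linearRep {G : Type} [Group G] [Finite G] (χ : G →* ℂˣ) :
    Simple (linearRep χ) := by
  have := Fintype.ofFinite G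
  rw [FDRep.simple_iff_char_is_norm_one]
  have hχ : ∀ g, (linearRep χ).character g = χ g := by
    intro g
    exact Algebra.trace_self_apply (R := ℂ) (χ g : ℂ)
  simp [hχ]

theorem codeg_linearRep {G : Type} [Group G] (χ : G →* ℂˣ) :
    codeg (linearRep χ) = Nat.card χ.range := by
  have hker : repKer (linearRep χ) = χ.ker := by
    ext g
    change Algebra.lmul ℂ ℂ (χ g : ℂ) = 1 ↔ χ g = 1
    rw [← map_one (Algebra.lmul ℂ ℂ), Algebra.lmul_injective.eq_iff, Units.val_eq_one]
  rw [codeg, hker, finrank_linearRep, Nat.div_one, Subgroup.index_ker]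

/-- The dual group of a nontrivial abelianization contains an element of prime order `p`; as a linear
character of `G` it has image of order `p`, and so has codegree `p`. -/
theorem exists_prime_mem_codSet {G : Type} [Group G] [Finite G] (hG : commutator G ≠ ⊤) :
    ∃ p, p.Prime ∧ p ∈ codSet G := by
  have : Nontrivial (Abelianization G) := QuotientGroup.nontrivial_iff.mpr hG
  have : Nontrivial (Abelianization G →* ℂˣ) := by
    obtain ⟨a, ha⟩ := exists_ne (1 : Abelianization G)
    obtain ⟨φ, hφ⟩ := CommGroup.exists_apply_ne_one_of_hasEnoughRootsOfUnity _ ℂ ha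
    exact ⟨φ, 1, fun h ↦ hφ (by rw [h]; rfl)⟩
  have : Finite (Abelianization G →* ℂˣ) := inferInstance
  obtain ⟨p, hp, hpd⟩ := Nat.exists_prime_and_dvd
    (Finite.one_lt_card (α := Abelianization G →* ℂˣ)).ne'
  have : Fact p.Prime := ⟨hp⟩
  obtain ⟨φ, hφ⟩ := exists_prime_orderOf_dvd_card' p hpd
  set χ : G →* ℂˣ := φ.comp Abelianization.of
  refine ⟨p, hp, linearRep χ, simple_linearRep χ, ?_⟩
  rw [codeg_linearRep]
  have hle : χ.range ≤ rootsOfUnity p ℂ := by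
    rintro _ ⟨g, rfl⟩
    have := DFunLike.congr_fun (hφ ▸ pow_orderOf_eq_one φ) (Abelianization.of g)
    exact this
  have hdvd := Subgroup.card_dvd_of_le hle
  have : NeZero p := ⟨hp.ne_zero⟩
  rw [Complex.card_rootsOfUnity] at hdvd
  refine (hp.eq_one_or_self_of_dvd _ hdvd).resolve_left fun h ↦ ?_
  rw [Subgroup.card_eq_one, MonoidHom.range_eq_bot_iff] at h
  have : φ = 1 := by
    ext g
    exact congr(($(DFunLike.congr_fun h g) : ℂ))
  rw [this, orderOf_one] at hφ
  exact hp.one_lt.ne hφ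

theorem perfect_of_cod_eq_simple {G : Type} [Group G] [Finite G]
    {H : Type} [Group H] [Finite H]
    (hsimple : IsSimpleGroup H) (hnonab : ∃ a b : H, a * b ≠ b * a)
    (hcod : codSet G = codSet H) :
    commutator G = ⊤ := by
  by_contra hG
  obtain ⟨p, hp, hmem⟩ := exists_prime_mem_codSet hG
  exact not_prime_mem_codSet hnonab hp (hcod ▸ hmem)
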